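/- For every integer r ≥ 20, p_{r+1}^{r-π(r)} > 2^{p_{r+1}}, where p_n denotes the n-th prime and π is the prime-counting function. -/

import Mathlib

/-- Primality test by trial division by the numbers below `68`, valid for `n < 68 ^ 2`. -/
def boundedPrimeTest (n : ℕ) : Bool :=
  Nat.ble 2 n &&
    Nat.rec true (fun d b => b && (Nat.ble d 1 || Nat.ble n d || !(Nat.beq (n % d) 0))) 68

/-- The number of `k < n` which pass `boundedPrimeTest`. -/
def boundedPrimeCount (n : ℕ) : ℕ :=
  Nat.rec 0 (fun d c => bif boundedPrimeTest d then c + 1 else c) n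

theorem natRec_and_eq_true_iff (f : ℕ → Bool) (m : ℕ) :
    (Nat.rec true (fun d b => b && f d) m : Bool) = true ↔ ∀ d < m, f d = true := by
  induction m with
  | zero => simp
  | succ m ih =>
    simp only [Bool.and_eq_true, ih]
    constructor
    · rintro ⟨h, h'⟩ d hd
      rcases Nat.lt_succ_iff_lt_or_eq.mp hd with hd | rfl
      exacts [h d hd, h']
    · exact fun h => ⟨fun d hd => h d (by omega), h m (by omega)⟩

theorem boundedPrimeTest_iff {n : ℕ} (hn : n < 4624) :
    boundedPrimeTest n = true ↔ n.Prime := by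
  unfold boundedPrimeTest
  rw [Bool.and_eq_true,
    natRec_and_eq_true_iff (fun d => Nat.ble d 1 || Nat.ble n d || !(Nat.beq (n % d) 0)),
    Nat.ble_eq]
  constructor
  · rintro ⟨h2, h⟩
    by_contra hp
    have hsq := Nat.minFac_sq_le_self (by omega) hp
    have hlt : n.minFac < 68 := by nlinarith
    have hmp := Nat.minFac_prime (n := n) (by omega)
    have hd := Nat.mod_eq_zero_of_dvd (Nat.minFac_dvd n)
    have h1 := hmp.two_le
    have hln : n.minFac < n := by nlinarith
    have := h n.minFac hlt
    simp only [Bool.or_eq_true, Nat.ble_eq, hd] at this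
    rcases this with (h | h) | h
    · omega
    · omega
    · simp at h
  · refine fun hp => ⟨hp.two_le, fun d _ => ?_⟩
    by_cases h1 : d ≤ 1
    · simp [Nat.ble_eq, h1]
    by_cases h2 : n ≤ d
    · simp [Nat.ble_eq, h2]
    have h3 : n % d ≠ 0 := fun h => by
      rcases (Nat.dvd_prime hp).mp (Nat.dvd_of_mod_eq_zero h) with h | h <;> omega
    have h4 : (n % d).beq 0 = false := by
      rw [← Bool.not_eq_true, Nat.beq_eq]; exact h3
    simp [h4]

theorem count_prime_eq_boundedPrimeCount {n : ℕ} (hn : n ≤ 4624) :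
    Nat.count Nat.Prime n = boundedPrimeCount n := by
  induction n with
  | zero => rfl
  | succ n ih =>
    rw [Nat.count_succ, ih (by omega)]
    change _ = bif boundedPrimeTest n then boundedPrimeCount n + 1 else boundedPrimeCount n
    have h := boundedPrimeTest_iff (n := n) (by omega)
    by_cases hp : n.Prime
    · simp [hp, h.mpr hp]
    · have : boundedPrimeTest n = false := by
        rw [← Bool.not_eq_true, h]; exact hp
      simp [hp, this]

theorem primeCounting_eq_boundedPrimeCount {n : ℕ} (hn : n < 4624) :
    n.primeCounting = boundedPrimeCount (n + 1) :=
  count_prime_eq_boundedPrimeCount hn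

theorem sub_primeCounting_mono {a b : ℕ} (h : a ≤ b) :
    a - a.primeCounting ≤ b - b.primeCounting := by
  induction b, h using Nat.le_induction with
  | base => exact le_rfl
  | succ b _ ih =>
    have : (b + 1).primeCounting ≤ b.primeCounting + 1 := by
      rw [Nat.primeCounting, Nat.primeCounting', Nat.count_succ]
      split_ifs <;> simp [Nat.primeCounting, Nat.primeCounting']
    omega

/-- If `2 ^ P < P ^ m`, the same holds for every `p` in `[3, P]`. -/
theorem two_pow_lt_pow_of_le {p P m : ℕ} (hp : 3 ≤ p) (hpP : p ≤ P) (h : 2 ^ P < P ^ m) :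
    2 ^ p < p ^ m := by
  have hp0 : (0 : ℝ) < p := by positivity
  have hP0 : (0 : ℝ) < P := by exact_mod_cast (by omega : 0 < P)
  have he : Real.exp 1 ≤ p := by
    have h3 : (3 : ℝ) ≤ p := by exact_mod_cast hp
    linarith [Real.exp_one_lt_d9]
  have hle : (p : ℝ) ≤ P := by exact_mod_cast hpP
  have hanti : Real.log P / P ≤ Real.log p / p :=
    Real.log_div_self_antitoneOn he (he.trans hle) hle
  have hlog : (P : ℝ) * Real.log 2 < m * Real.log P := by
    rw [← Real.log_pow, ← Real.log_pow]
    exact Real.log_lt_log (by positivity) (by exact_mod_cast h)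
  have key : (p : ℝ) * Real.log 2 < m * Real.log p := by
    have h1 : Real.log 2 < m * (Real.log P / P) := by
      rw [← mul_div_assoc, lt_div_iff₀ hP0]; linarith
    have h2 : Real.log 2 < m * (Real.log p / p) :=
      h1.trans_le (mul_le_mul_of_nonneg_left hanti (Nat.cast_nonneg m))
    rw [← mul_div_assoc, lt_div_iff₀ hp0] at h2
    linarith
  rw [← Real.log_pow, ← Real.log_pow] at key
  exact_mod_cast (Real.log_lt_log_iff (by positivity) (by positivity)).mp key

/-- For `a ≤ r ≤ b`, the claim follows from its strengthening with the base taken at `b` and the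
exponent at `a`. -/
theorem two_pow_nth_prime_lt_of_mem_Icc {a k b P r : ℕ} (hP : P < 4624)
    (hk : boundedPrimeCount (a + 1) = k) (hPp : boundedPrimeTest P = true)
    (hb : boundedPrimeCount P = b) (h : 2 ^ P < P ^ (a - k)) (ha : 1 ≤ a) (har : a ≤ r)
    (hrb : r ≤ b) :
    2 ^ Nat.nth Nat.Prime r < Nat.nth Nat.Prime r ^ (r - r.primeCounting) := by
  have hprime := (boundedPrimeTest_iff hP).mp hPp
  have hnth : Nat.nth Nat.Prime b = P := by
    rw [← hb, ← count_prime_eq_boundedPrimeCount hP.le, Nat.nth_count hprime]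
  have hle : Nat.nth Nat.Prime r ≤ P :=
    hnth ▸ Nat.nth_monotone Nat.infinite_setOfPred_prime hrb
  have h3 : 3 ≤ Nat.nth Nat.Prime r := by
    have := Nat.add_two_le_nth_prime r
    omega
  have haP : a < 4623 := by
    have := Nat.add_two_le_nth_prime r
    omega
  have hka : a.primeCounting = k := by
    rw [primeCounting_eq_boundedPrimeCount (by omega), hk]
  refine (two_pow_lt_pow_of_le h3 hle h).trans_le (Nat.pow_le_pow_right (by omega) ?_)
  rw [← hka]
  exact sub_primeCounting_mono har

theorem two_pow_nth_prime_lt_of_le {r : ℕ} (hr : 20 ≤ r) (hr' : r ≤ 603) :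
    2 ^ Nat.nth Nat.Prime r < Nat.nth Nat.Prime r ^ (r - r.primeCounting) := by
  have key (a k b P : ℕ) (h : P < 4624 ∧ boundedPrimeCount (a + 1) = k ∧
      boundedPrimeTest P = true ∧ boundedPrimeCount P = b ∧ 2 ^ P < P ^ (a - k) ∧ 1 ≤ a)
      (har : a ≤ r) (hrb : r ≤ b) :
      2 ^ Nat.nth Nat.Prime r < Nat.nth Nat.Prime r ^ (r - r.primeCounting) :=
    two_pow_nth_prime_lt_of_mem_Icc h.1 h.2.1 h.2.2.1 h.2.2.2.1 h.2.2.2.2.1 h.2.2.2.2.2 har hrb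
  rcases le_or_gt r 20 with h | h
  · exact key 20 8 20 73 (by decide +kernel) hr h
  rcases le_or_gt r 21 with h' | h
  · exact key 21 8 21 79 (by decide +kernel) h h'
  rcases le_or_gt r 23 with h' | h
  · exact key 22 8 23 89 (by decide +kernel) h h'
  rcases le_or_gt r 24 with h' | h
  · exact key 24 9 24 97 (by decide +kernel) h h'
  rcases le_or_gt r 27 with h' | h
  · exact key 25 9 27 107 (by decide +kernel) h h'
  rcases le_or_gt r 31 with h' | h
  · exact key 28 9 31 131 (by decide +kernel) h h'
  rcases le_or_gt r 35 with h' | h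
  · exact key 32 11 35 151 (by decide +kernel) h h'
  rcases le_or_gt r 41 with h' | h
  · exact key 36 11 41 181 (by decide +kernel) h h'
  rcases le_or_gt r 47 with h' | h
  · exact key 42 13 47 223 (by decide +kernel) h h'
  rcases le_or_gt r 55 with h' | h
  · exact key 48 15 55 263 (by decide +kernel) h h'
  rcases le_or_gt r 66 with h' | h
  · exact key 56 16 66 331 (by decide +kernel) h h'
  rcases le_or_gt r 79 with h' | h
  · exact key 67 19 79 409 (by decide +kernel) h h'
  rcases le_or_gt r 98 with h' | h
  · exact key 80 22 98 523 (by decide +kernel) h h'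
  rcases le_or_gt r 124 with h' | h
  · exact key 99 25 124 691 (by decide +kernel) h h'
  rcases le_or_gt r 158 with h' | h
  · exact key 125 30 158 937 (by decide +kernel) h h'
  rcases le_or_gt r 203 with h' | h
  · exact key 159 37 203 1249 (by decide +kernel) h h'
  rcases le_or_gt r 263 with h' | h
  · exact key 204 46 263 1693 (by decide +kernel) h h'
  rcases le_or_gt r 343 with h' | h
  · exact key 264 56 343 2311 (by decide +kernel) h h'
  rcases le_or_gt r 453 with h' | h
  · exact key 344 68 453 3209 (by decide +kernel) h h'
  · exact key 454 87 603 4447 (by decide +kernel) h hr'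

theorem primeCounting'_add_le_add_totient {a k : ℕ} (h0 : a ≠ 0)
    (hk : a.primeFactors ⊆ Finset.range k) :
    Nat.primeCounting' (k + a) ≤ Nat.primeCounting' k + Nat.totient a := by
  rw [Nat.primeCounting', Nat.count_add, add_le_add_iff_left, Nat.count_eq_card_filter_range,
    ← Nat.filter_coprime_Ico_eq_totient a k]
  refine Finset.card_le_card_of_injOn (fun i => k + i) (fun i hi => ?_) (fun i _ j _ h => by
    simpa using h)
  simp only [Finset.coe_filter, Finset.mem_range, Set.mem_ofPred_eq, Finset.mem_Ico] at hi ⊢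
  refine ⟨⟨by omega, by omega⟩, (Nat.coprime_comm.mp ((Nat.Prime.coprime_iff_not_dvd hi.2).mpr
    fun hd => ?_))⟩
  have := Finset.mem_range.mp (hk (Nat.mem_primeFactors.mpr ⟨hi.2, hd, h0⟩))
  omega

/-- Sieving by `2, 3, 5, 7`. -/
theorem mul_primeCounting_le_mul_add (r : ℕ) (hr : 8 ≤ r) :
    210 * r.primeCounting ≤ 48 * r + 910 := by
  induction r using Nat.strong_induction_on with
  | _ r ih =>
    rcases lt_or_ge r 218 with h | h
    · rw [primeCounting_eq_boundedPrimeCount (by omega)]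
      have base : ∀ s < 218, 8 ≤ s → 210 * boundedPrimeCount (s + 1) ≤ 48 * s + 910 := by
        decide +kernel
      exact base r h hr
    · have h1 := ih (r - 210) (by omega) (by omega)
      have h2 := primeCounting'_add_le_add_totient (a := 210) (k := r - 210 + 1) (by norm_num)
        (fun p hp => by
          have h8 : p ∣ 2 * 3 * 5 * 7 := Nat.dvd_of_mem_primeFactors hp
          have hpp := Nat.prime_of_mem_primeFactors hp
          simp only [hpp.dvd_mul] at h8
          have := fun q (hq : q ≠ 0) (h : p ∣ q) => Nat.le_of_dvd (Nat.pos_of_ne_zero hq) h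
          rw [Finset.mem_range]
          rcases h8 with ((h | h) | h) | h <;>
            have := Nat.le_of_dvd (by norm_num) h <;> omega)
      have ht : Nat.totient 210 = 48 := by decide +kernel
      rw [ht, show r - 210 + 1 + 210 = r + 1 by omega] at h2
      change r.primeCounting ≤ (r - 210).primeCounting + 48 at h2
      omega

/-- Chebyshev's divisibility: the integer form of `⌊x⌋ - ⌊x/2⌋ - ⌊x/3⌋ - ⌊x/5⌋ + ⌊x/30⌋ ≤ 1`. -/
theorem factorial_mul_factorial_dvd_mul_lcmUpto (n : ℕ) :
    n.factorial * (n / 30).factorial ∣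
      (n / 2).factorial * (n / 3).factorial * (n / 5).factorial * n.lcmUpto := by
  have hf (m : ℕ) : m.factorial ≠ 0 := Nat.factorial_ne_zero m
  have hl := Nat.lcmUpto_ne_zero n
  rw [← Nat.factorization_le_iff_dvd (by simp [hf]) (by simp [hf, hl])]
  intro p
  by_cases hp : p.Prime
  swap
  · simp [Nat.factorization_eq_zero_of_not_prime _ hp]
  have hlog (d : ℕ) : Nat.log p (n / d) < Nat.log p n + 1 :=
    Nat.lt_succ_of_le (Nat.log_mono_right (Nat.div_le_self n d))
  have h1 : Nat.log p n = ∑ i ∈ Finset.Ico 1 (Nat.log p n + 1), 1 := by simp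
  rw [Nat.factorization_mul (hf _) (hf _),
    Nat.factorization_mul (by simp [hf]) hl, Nat.factorization_mul (by simp [hf]) (hf _),
    Nat.factorization_mul (hf _) (hf _)]
  simp only [Finsupp.add_apply]
  rw [Nat.factorization_lcmUpto n hp, Nat.factorization_factorial hp (Nat.lt_add_one _),
    Nat.factorization_factorial hp (hlog 30), Nat.factorization_factorial hp (hlog 2),
    Nat.factorization_factorial hp (hlog 3), Nat.factorization_factorial hp (hlog 5)]
  conv_rhs => arg 2; rw [h1]
  rw [← Finset.sum_add_distrib, ← Finset.sum_add_distrib, ← Finset.sum_add_distrib,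
    ← Finset.sum_add_distrib]
  refine Finset.sum_le_sum fun i _ => ?_
  rw [Nat.div_right_comm n 30, Nat.div_right_comm n 2, Nat.div_right_comm n 3,
    Nat.div_right_comm n 5]
  omega

theorem mul_log_sub_self_mono {x y : ℝ} (hx : 1 ≤ x) (hxy : x ≤ y) :
    x * Real.log x - x ≤ y * Real.log y - y := by
  have hx0 : 0 < x := by linarith
  have hy0 : 0 < y := by linarith
  have h1 : Real.log x - Real.log y ≤ x / y - 1 := by
    rw [← Real.log_div hx0.ne' hy0.ne']
    exact Real.log_le_sub_one_of_pos (by positivity)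
  have h2 : y * (Real.log x - Real.log y) ≤ x - y := by
    calc y * (Real.log x - Real.log y) ≤ y * (x / y - 1) := mul_le_mul_of_nonneg_left h1 hy0.le
      _ = x - y := by field_simp
  nlinarith [mul_nonneg (sub_nonneg.mpr hxy) (Real.log_nonneg hx)]

theorem mul_log_sub_self_le_log_factorial {n : ℕ} (hn : n ≠ 0) :
    n * Real.log n - n ≤ Real.log n.factorial := by
  have h := Stirling.le_log_factorial_stirling hn
  have h1 : 0 ≤ Real.log n := Real.log_natCast_nonneg n
  have h2 : 0 ≤ Real.log (2 * Real.pi) := Real.log_nonneg (by linarith [Real.pi_gt_three])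
  linarith

theorem log_factorial_le {n : ℕ} (hn : 1 ≤ n) :
    Real.log n.factorial ≤ n * Real.log n - n + Real.log n + 1 := by
  induction n, hn using Nat.le_induction with
  | base => simp
  | succ n hn ih =>
    have hn0 : (0 : ℝ) < n := by exact_mod_cast hn
    have h1 : Real.log n - Real.log (n + 1) ≤ n / (n + 1) - 1 := by
      rw [← Real.log_div hn0.ne' (by positivity)]
      exact Real.log_le_sub_one_of_pos (by positivity)
    have h2 : (n + 1 : ℝ) * (Real.log n - Real.log (n + 1)) ≤ -1 := by
      calc (n + 1 : ℝ) * (Real.log n - Real.log (n + 1)) ≤ (n + 1) * (n / (n + 1) - 1) :=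
            mul_le_mul_of_nonneg_left h1 (by positivity)
        _ = -1 := by field_simp; ring
    rw [Nat.factorial_succ, Nat.cast_mul, Real.log_mul (by positivity) (by positivity)]
    push_cast
    linarith

theorem log_factorial_floor_div_le {n d : ℕ} (hd : 0 < d) (hdn : d ≤ n) :
    Real.log (n / d).factorial ≤
      (n / d : ℝ) * Real.log (n / d : ℝ) - n / d + Real.log (n / d : ℝ) + 1 := by
  have h1 : 1 ≤ n / d := (Nat.one_le_div_iff hd).mpr hdn
  have h1' : (1 : ℝ) ≤ (n / d : ℕ) := by exact_mod_cast h1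
  have hle : ((n / d : ℕ) : ℝ) ≤ n / d := Nat.cast_div_le
  have := mul_log_sub_self_mono h1' hle
  have := Real.log_le_log (by linarith) hle
  linarith [log_factorial_le h1]

theorem le_log_factorial_floor_div {n d : ℕ} (hd : 0 < d) (hdn : d ≤ n) :
    (n / d : ℝ) * Real.log (n / d : ℝ) - n / d - Real.log (n / d + 1 : ℝ) ≤
      Real.log (n / d).factorial := by
  have hd' : (0 : ℝ) < d := by exact_mod_cast hd
  have h1' : (1 : ℝ) ≤ n / d := by
    rw [le_div_iff₀ hd']; simpa using (by exact_mod_cast hdn : (d : ℝ) ≤ n)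
  have hlt : (n / d : ℝ) ≤ ((n / d + 1 : ℕ) : ℝ) := by
    rw [div_le_iff₀ hd']
    exact_mod_cast (Nat.lt_mul_of_div_lt (Nat.lt_succ_self (n / d)) hd).le
  have hle : ((n / d : ℕ) : ℝ) ≤ n / d := Nat.cast_div_le
  have h2 := mul_log_sub_self_mono h1' hlt
  have h3 := mul_log_sub_self_le_log_factorial (Nat.succ_ne_zero (n / d))
  rw [Nat.succ_eq_add_one] at h3
  rw [Nat.factorial_succ, Nat.cast_mul, Real.log_mul (by positivity) (by positivity)] at h3
  have h4 : Real.log ((n / d + 1 : ℕ) : ℝ) ≤ Real.log (n / d + 1 : ℝ) :=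
    Real.log_le_log (by positivity) (by push_cast; linarith)
  linarith

theorem log_three_ge : 19 / 12 * Real.log 2 ≤ Real.log 3 := by
  have : Real.log ((2 : ℝ) ^ 19) ≤ Real.log ((3 : ℝ) ^ 12) :=
    Real.log_le_log (by norm_num) (by norm_num)
  rw [Real.log_pow, Real.log_pow] at this
  push_cast at this
  linarith

theorem log_five_ge : 65 / 28 * Real.log 2 ≤ Real.log 5 := by
  have : Real.log ((2 : ℝ) ^ 65) ≤ Real.log ((5 : ℝ) ^ 28) :=
    Real.log_le_log (by norm_num) (by norm_num)
  rw [Real.log_pow, Real.log_pow] at this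
  push_cast at this
  linarith

/-- Chebyshev's lower bound for `ψ`, with his constant `0.921…` bounded below by
`(93 / 70) * log 2`. -/
theorem chebyshev_psi_ge {n : ℕ} (hn : 30 ≤ n) :
    93 / 70 * Real.log 2 * n - 4 * Real.log n ≤ Chebyshev.psi n := by
  have hn' : (30 : ℝ) ≤ n := by exact_mod_cast hn
  have hn0 : (0 : ℝ) < n := by linarith
  have hf (m : ℕ) : (0 : ℝ) < m.factorial := by exact_mod_cast Nat.factorial_pos m
  have hl : (0 : ℝ) < n.lcmUpto := by exact_mod_cast Nat.lcmUpto_pos n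
  have hdvd : (n.factorial : ℝ) * (n / 30).factorial ≤
      (n / 2).factorial * (n / 3).factorial * (n / 5).factorial * n.lcmUpto := by
    exact_mod_cast Nat.le_of_dvd
      (by have := Nat.lcmUpto_pos n; positivity) (factorial_mul_factorial_dvd_mul_lcmUpto n)
  have hlog := Real.log_le_log (mul_pos (hf _) (hf _)) hdvd
  rw [Real.log_mul (hf _).ne' (hf _).ne',
    Real.log_mul (mul_pos (mul_pos (hf _) (hf _)) (hf _)).ne' hl.ne',
    Real.log_mul (mul_pos (hf _) (hf _)).ne' (hf _).ne',
    Real.log_mul (hf _).ne' (hf _).ne', ← Chebyshev.psi_eq_log_lcmUpto] at hlog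
  have h1 := mul_log_sub_self_le_log_factorial (n := n) (by omega)
  have h30 := le_log_factorial_floor_div (n := n) (d := 30) (by norm_num) hn
  have h2 := log_factorial_floor_div_le (n := n) (d := 2) (by norm_num) (by omega)
  have h3 := log_factorial_floor_div_le (n := n) (d := 3) (by norm_num) (by omega)
  have h5 := log_factorial_floor_div_le (n := n) (d := 5) (by norm_num) (by omega)
  push_cast at h30 h2 h3 h5
  have e30 : Real.log 30 = Real.log 2 + Real.log 3 + Real.log 5 := by
    rw [← Real.log_mul (by norm_num) (by norm_num), ← Real.log_mul (by norm_num) (by norm_num)]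
    norm_num
  have hr : Real.log (n / 30 + 1 : ℝ) ≤ Real.log n :=
    Real.log_le_log (by positivity) (by linarith)
  have h3L := log_three_ge
  have h5L := log_five_ge
  have hL := Real.log_two_gt_d9
  rw [Real.log_div hn0.ne' (by norm_num), e30] at h30
  rw [Real.log_div hn0.ne' (by norm_num)] at h2 h3 h5
  have hA : 93 / 70 * Real.log 2 * n ≤
      (7 / 15 * Real.log 2 + 3 / 10 * Real.log 3 + 1 / 6 * Real.log 5) * n :=
    mul_le_mul_of_nonneg_right (by linarith) hn0.le
  linarith

theorem two_pow_nth_prime_lt_of_large {r : ℕ} (hr : 8 ≤ r) (hP : 4096 ≤ Nat.nth Nat.Prime r) :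
    2 ^ Nat.nth Nat.Prime r < Nat.nth Nat.Prime r ^ (r - r.primeCounting) := by
  have hpi : (Nat.nth Nat.Prime r).primeCounting = r + 1 := by
    rw [Nat.primeCounting, Nat.primeCounting', Nat.count_succ,
      Nat.count_nth_of_infinite Nat.infinite_setOfPred_prime,
      if_pos (Nat.prime_nth_prime r)]
  set n := Nat.nth Nat.Prime r
  have hn : (4096 : ℝ) ≤ n := by exact_mod_cast hP
  have hn0 : (0 : ℝ) < n := by linarith
  have hpsi := Chebyshev.psi_le_primeCounting_mul_log n
  rw [hpi] at hpsi
  push_cast at hpsi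
  have hlow := chebyshev_psi_ge (n := n) (by omega)
  have hsieve : (210 : ℝ) * r.primeCounting ≤ 48 * r + 910 := by
    exact_mod_cast mul_primeCounting_le_mul_add r hr
  have hL : 0 < Real.log 2 := Real.log_pos (by norm_num)
  have hlog0 : 0 < Real.log n := Real.log_pos (by linarith)
  have hlogn : Real.log n ≤ 12 / 4096 * Real.log 2 * n := by
    have h := Real.log_div_self_antitoneOn (a := 4096) (b := n)
      (by rw [Set.mem_Ici]; linarith [Real.exp_one_lt_d9])
      (by rw [Set.mem_Ici]; linarith [Real.exp_one_lt_d9]) hn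
    have h12 : Real.log 4096 = 12 * Real.log 2 := by
      rw [show (4096 : ℝ) = 2 ^ 12 by norm_num, Real.log_pow]; norm_num
    simp only [h12] at h
    rw [div_le_iff₀ hn0] at h
    linarith
  have hexp : (162 * r - 910 : ℝ) / 210 ≤ (r - r.primeCounting : ℕ) := by
    have : (r : ℝ) ≤ (r - r.primeCounting : ℕ) + r.primeCounting := by
      exact_mod_cast (by omega : r ≤ r - r.primeCounting + r.primeCounting)
    linarith
  have key : (n : ℝ) * Real.log 2 < (r - r.primeCounting : ℕ) * Real.log n := by
    have h1 := mul_le_mul_of_nonneg_right hexp hlog0.le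
    have h2 : 0 < Real.log 2 * n := mul_pos hL hn0
    linarith
  rw [← Real.log_pow, ← Real.log_pow] at key
  exact_mod_cast (Real.log_lt_log_iff (by positivity) (by positivity)).mp key

/-- For every integer r ≥ 20, p_{r+1}^{r-π(r)} > 2^{p_{r+1}},
where `Nat.nth Nat.Prime` is 0-indexed (so `Nat.nth Nat.Prime r` is the (r+1)-th prime)
and `Nat.primeCounting` is the prime-counting function π. -/
theorem stmt_0 (r : ℕ) (hr : 20 ≤ r) :
    (Nat.nth Nat.Prime r) ^ (r - Nat.primeCounting r) > 2 ^ (Nat.nth Nat.Prime r) := by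
  rcases le_or_gt r 603 with h | h
  · exact two_pow_nth_prime_lt_of_le hr h
  · refine two_pow_nth_prime_lt_of_large (by omega) ?_
    have h4447 : Nat.nth Nat.Prime 603 = 4447 := by
      have hc : boundedPrimeCount 4447 = 603 := by decide +kernel
      have hp : boundedPrimeTest 4447 = true := by decide +kernel
      rw [← hc, ← count_prime_eq_boundedPrimeCount (by norm_num),
        Nat.nth_count ((boundedPrimeTest_iff (by norm_num)).mp hp)]
    have hle : Nat.nth Nat.Prime 603 ≤ Nat.nth Nat.Prime r :=
      Nat.nth_monotone Nat.infinite_setOfPred_prime h.le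
    omega
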